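/- Let $X$ be a complex Banach space, $a<b$ real numbers and $\tau$ a finite positive Borel measure on $[a,b]$. Let $V_{[a,b]}(X)$ be the set of closed densely defined linear operators $A$ in $X$ whose resolvent set contains $[a,b]$; write $R(t,A)=(tI-A)^{-1}$ and $m_A=\max_{t\in[a,b]}\|R(t,A)\|$. Let $(\mathcal I,\|\cdot\|_{\mathcal I})$ be an operator ideal in $X$, i.e. a two-sided ideal of the algebra $LB(X)$ of bounded linear operators on $X$ that is complete in a norm with $\|PSQ\|_{\mathcal I}\le\|P\|\,\|S\|_{\mathcal I}\,\|Q\|$ and $\|S\|\le\|S\|_{\mathcal I}$ for all $P,Q\in LB(X)$, $S\in\mathcal I$ (the case $\mathcal I=LB(X)$ with the operator norm is included). For $A\in V_{[a,b]}(X)$ and $B\in\mathcal I$ put $$f^\nabla_A(B)=\int_a^b R(t,A)\,B\,R(t,A)\,t\,d\tau(t).$$ (This is the Fréchet derivative at $A$ of the operator function given by $f(z)=\int_a^b\frac{z}{t-z}\,d\tau(t)$.) Call $A,A'\in V_{[a,b]}(X)$ $\mathcal I$-equivalent if $A'=A+S$ with $S\in\mathcal I$ (so $A$ and $A'$ have the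 same domain), with the distance $\|A'-A\|_{\mathcal I}=\|S\|_{\mathcal I}$ on each equivalence class. Then: 1. The integral exists as a Bochner integral in the norm of $\mathcal I$, and $f^\nabla_A$ is a bounded linear operator on $\mathcal I$ for every $A\in V_{[a,b]}(X)$. 2. If $A,A'\in V_{[a,b]}(X)$ are $\mathcal I$-equivalent, $\varepsilon>0$ and $\|A'-A\|_{\mathcal I}<\min\{1/(2m_A),\varepsilon\}$, then for every $B\in\mathcal I$ $$\|f^\nabla_{A'}(B)-f^\nabla_A(B)\|_{\mathcal I}\le 8\,m_A^3\left(\int_a^b|t|\,d\tau(t)\right)\varepsilon\,\|B\|_{\mathcal I}.$$ 3. The map $A\mapsto f^\nabla_A$ is continuous, in the operator norm of $LB(\mathcal I)$, on each $\mathcal I$-equivalence class of operators in $V_{[a,b]}(X)$. -/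

import Mathlib

open MeasureTheory Set

/-- `R` is the resolvent `(z·I - A)⁻¹` of the (possibly unbounded) operator `A` at the point `z`:
a bounded everywhere defined operator that is a two-sided inverse of `z·I - A : D(A) → X`. -/
def IsResolventAt {X : Type*} [NormedAddCommGroup X] [NormedSpace ℂ X]
    (A : X →ₗ.[ℂ] X) (z : ℂ) (R : X →L[ℂ] X) : Prop :=
  (∀ x : X, ∃ h : R x ∈ A.domain, z • R x - A ⟨R x, h⟩ = x) ∧
    ∀ x : A.domain, R (z • (x : X) - A x) = x

open Classical in
/-- The resolvent `R(z,A)`; it is `0` (a junk value) if `z` is not in the resolvent set of `A`. -/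
noncomputable def pResolvent {X : Type*} [NormedAddCommGroup X] [NormedSpace ℂ X]
    (z : ℂ) (A : X →ₗ.[ℂ] X) : X →L[ℂ] X :=
  if h : ∃ R : X →L[ℂ] X, IsResolventAt A z R then h.choose else 0

/-- The class `V_{[a,b]}(X)`: closed densely defined operators in `X` whose resolvent set
contains `[a,b]`. -/
def MemVab {X : Type*} [NormedAddCommGroup X] [NormedSpace ℂ X]
    (a b : ℝ) (A : X →ₗ.[ℂ] X) : Prop :=
  A.IsClosed ∧ Dense (A.domain : Set X) ∧
    ∀ t ∈ Icc a b, ∃ R : X →L[ℂ] X, IsResolventAt A (t : ℂ) R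

/-- `m_A = max_{t ∈ [a,b]} ‖R(t,A)‖`. -/
noncomputable def mConst {X : Type*} [NormedAddCommGroup X] [NormedSpace ℂ X]
    (a b : ℝ) (A : X →ₗ.[ℂ] X) : ℝ :=
  sSup ((fun t : ℝ => ‖pResolvent (t : ℂ) A‖) '' Icc a b)

/-- The operator `A + T` with domain `D(A)`, for a bounded operator `T`. -/
def perturb {X : Type*} [NormedAddCommGroup X] [NormedSpace ℂ X]
    (A : X →ₗ.[ℂ] X) (T : X →L[ℂ] X) : X →ₗ.[ℂ] X :=
  (T : X →ₗ[ℂ] X) +ᵥ A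

/-- An operator ideal in `X`: a two-sided ideal of the algebra of bounded operators on `X`,
with a norm of its own. The elements of the ideal with this norm are the normed space `J`
(its completeness is a separate instance `CompleteSpace J`), and `toOp` is the inclusion of the
ideal in the algebra of bounded operators. -/
structure OperatorIdeal (X : Type*) [NormedAddCommGroup X] [NormedSpace ℂ X]
    (J : Type*) [NormedAddCommGroup J] [NormedSpace ℂ J] where
  toOp : J →ₗ[ℂ] (X →L[ℂ] X)
  toOp_injective : Function.Injective toOp
  exists_mul_mul : ∀ (P : X →L[ℂ] X) (S : J) (Q : X →L[ℂ] X), ∃ T : J, toOp T = P * toOp S * Q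
  norm_mul_mul_le : ∀ (P : X →L[ℂ] X) (S : J) (Q : X →L[ℂ] X) (T : J),
    toOp T = P * toOp S * Q → ‖T‖ ≤ ‖P‖ * ‖S‖ * ‖Q‖
  norm_toOp_le : ∀ S : J, ‖toOp S‖ ≤ ‖S‖

/-- The product `P·S·Q`, for an element `S` of the ideal and bounded operators `P`, `Q`, as an
element of the ideal. -/
noncomputable def OperatorIdeal.mulMul {X : Type*} [NormedAddCommGroup X] [NormedSpace ℂ X]
    {J : Type*} [NormedAddCommGroup J] [NormedSpace ℂ J] (I : OperatorIdeal X J)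
    (P : X →L[ℂ] X) (S : J) (Q : X →L[ℂ] X) : J :=
  (I.exists_mul_mul P S Q).choose

/-- The integrand `R(t,A)·B·R(t,A)·t`, with values in the ideal. -/
noncomputable def fDerIntegrand {X : Type*} [NormedAddCommGroup X] [NormedSpace ℂ X]
    {J : Type*} [NormedAddCommGroup J] [NormedSpace ℂ J] (I : OperatorIdeal X J)
    (A : X →ₗ.[ℂ] X) (B : J) (t : ℝ) : J :=
  t • I.mulMul (pResolvent (t : ℂ) A) B (pResolvent (t : ℂ) A)

/-- The transformer `f^∇_A(B) = ∫_a^b R(t,A)·B·R(t,A)·t dτ(t)`, a Bochner integral in the norm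
of the ideal. -/
noncomputable def fDer {X : Type*} [NormedAddCommGroup X] [NormedSpace ℂ X]
    {J : Type*} [NormedAddCommGroup J] [NormedSpace ℂ J] (I : OperatorIdeal X J)
    (τ : Measure ℝ) (a b : ℝ) (A : X →ₗ.[ℂ] X) (B : J) : J :=
  ∫ t in Icc a b, fDerIntegrand I A B t ∂τ

open Filter Topology

/-!
If `A' = A + S`, the second resolvent identity `R(t,A') - R(t,A) = R(t,A') S R(t,A)` gives, for
`‖S‖ m_A ≤ 1/2`, first `‖R(t,A')‖ ≤ 2 m_A` and then `‖R(t,A') - R(t,A)‖ ≤ 2 m_A² ‖S‖`. Hence the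
operators `B ↦ R(t,A) B R(t,A)` on the ideal change by at most `6 m_A³ ‖S‖` in norm. Integrating
these operators rather than their values at each `B` yields `f^∇_A` as a bounded operator, and the
same bound for it, from which the continuity follows. The case where `S` is a multiple of the
identity gives the norm continuity of `t ↦ R(t,A)`, so that the integrals exist.
-/

theorem continuousWithinAt_of_norm_sub_le {E F : Type*} [SeminormedAddCommGroup E]
    [SeminormedAddCommGroup F] {f : E → F} {s : Set E} {x : E} {m q C : ℝ} (hq : 0 < q)
    (h : ∀ y ∈ s, ‖y - x‖ * m ≤ q → ‖f y - f x‖ ≤ C * ‖y - x‖) :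
    ContinuousWithinAt f s x := by
  have hsub : Tendsto (fun y => ‖y - x‖) (𝓝[s] x) (𝓝 0) :=
    (tendsto_norm_sub_self x).mono_left nhdsWithin_le_nhds
  have hnear : ∀ᶠ y in 𝓝[s] x, ‖y - x‖ * m ≤ q :=
    (hsub.mul_const m).eventually (Iic_mem_nhds (by rwa [zero_mul]))
  have hlim : Tendsto (fun y => C * ‖y - x‖) (𝓝[s] x) (𝓝 0) := by
    simpa only [mul_zero] using hsub.const_mul C
  refine tendsto_iff_norm_sub_tendsto_zero.2 <|
    squeeze_zero' (Eventually.of_forall fun y => norm_nonneg _) ?_ hlim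
  filter_upwards [hnear, self_mem_nhdsWithin] with y hy hys using h y hys hy

section NormedRing

variable {𝓐 : Type*} [NonUnitalSeminormedRing 𝓐] {R R' D : 𝓐}

theorem norm_le_two_mul_of_sub_eq_mul_mul (h : R' - R = R' * D * R) (hD : ‖D‖ * ‖R‖ ≤ 1 / 2) :
    ‖R'‖ ≤ 2 * ‖R‖ := by
  have : ‖R'‖ ≤ ‖R‖ + ‖R'‖ / 2 :=
    calc ‖R'‖ ≤ ‖R‖ + ‖R' - R‖ := norm_le_insert' R' R
      _ ≤ ‖R‖ + ‖R'‖ * (‖D‖ * ‖R‖) := by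
        rw [h, ← mul_assoc]
        gcongr
        exact norm_mul₃_le
      _ ≤ ‖R‖ + ‖R'‖ * (1 / 2) := by gcongr
      _ = ‖R‖ + ‖R'‖ / 2 := by ring
  linarith

theorem norm_sub_le_of_sub_eq_mul_mul (h : R' - R = R' * D * R) (hD : ‖D‖ * ‖R‖ ≤ 1 / 2) :
    ‖R' - R‖ ≤ 2 * ‖R‖ ^ 2 * ‖D‖ :=
  calc ‖R' - R‖ ≤ ‖R'‖ * ‖D‖ * ‖R‖ := h ▸ norm_mul₃_le
    _ ≤ 2 * ‖R‖ * ‖D‖ * ‖R‖ := by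
      gcongr
      exact norm_le_two_mul_of_sub_eq_mul_mul h hD
    _ = 2 * ‖R‖ ^ 2 * ‖D‖ := by ring

end NormedRing

section Resolvent

variable {X : Type*} [NormedAddCommGroup X] [NormedSpace ℂ X] {A : X →ₗ.[ℂ] X} {K : Set ℝ}

theorem perturb_zero (A : X →ₗ.[ℂ] X) : perturb A 0 = A :=
  zero_vadd (X →ₗ[ℂ] X) A

theorem perturb_perturb (A : X →ₗ.[ℂ] X) (S T : X →L[ℂ] X) :
    perturb (perturb A S) T = perturb A (T + S) :=
  (add_vadd (T : X →ₗ[ℂ] X) (S : X →ₗ[ℂ] X) A).symm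

theorem IsResolventAt.sub_eq_mul_mul {T R R' : X →L[ℂ] X} {z w : ℂ}
    (hR : IsResolventAt A z R) (hR' : IsResolventAt (perturb A T) w R') :
    R' - R = R' * ((z - w) • 1 + T) * R := by
  ext x
  obtain ⟨hmem, hx⟩ := hR.1 x
  have hA : A ⟨R x, hmem⟩ = z • R x - x := by
    rw [eq_sub_iff_add_eq', ← sub_eq_iff_eq_add.1 hx]
  have hR'x : R' (w • R x - (T (R x) + A ⟨R x, hmem⟩)) = R x := hR'.2 ⟨R x, hmem⟩
  calc R' x - R x = R' (x - (w • R x - (T (R x) + A ⟨R x, hmem⟩))) := by rw [map_sub, hR'x]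
    _ = R' ((z - w) • R x + T (R x)) := by
      rw [hA]
      congr 1
      module

/-- The resolvent set of a possibly unbounded operator: the points at which
`pResolvent` is not a junk value. -/
def pResolventSet (A : X →ₗ.[ℂ] X) : Set ℂ :=
  {z | ∃ R : X →L[ℂ] X, IsResolventAt A z R}

theorem isResolventAt_pResolvent {z : ℂ} (hz : z ∈ pResolventSet A) :
    IsResolventAt A z (pResolvent z A) := by
  have hz : ∃ R, IsResolventAt A z R := hz
  rw [pResolvent, dif_pos hz]
  exact hz.choose_spec

theorem pResolvent_sub_pResolvent {z w : ℂ} (hz : z ∈ pResolventSet A)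
    (hw : w ∈ pResolventSet A) :
    pResolvent w A - pResolvent z A = pResolvent w A * ((z - w) • 1) * pResolvent z A := by
  have hR' : IsResolventAt (perturb A 0) w (pResolvent w A) := by
    rw [perturb_zero]
    exact isResolventAt_pResolvent hw
  simpa only [add_zero] using (isResolventAt_pResolvent hz).sub_eq_mul_mul hR'

theorem pResolvent_perturb_sub_pResolvent {T : X →L[ℂ] X} {z : ℂ} (hz : z ∈ pResolventSet A)
    (hz' : z ∈ pResolventSet (perturb A T)) :
    pResolvent z (perturb A T) - pResolvent z A =
      pResolvent z (perturb A T) * T * pResolvent z A := by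
  simpa only [sub_self, zero_smul, zero_add] using
    (isResolventAt_pResolvent hz).sub_eq_mul_mul (isResolventAt_pResolvent hz')

theorem continuousOn_pResolvent (A : X →ₗ.[ℂ] X) :
    ContinuousOn (fun z => pResolvent z A) (pResolventSet A) := by
  intro z hz
  refine continuousWithinAt_of_norm_sub_le (m := ‖pResolvent z A‖)
    (C := 2 * ‖pResolvent z A‖ ^ 2) one_half_pos fun w hw hwz => ?_
  have hD : ‖(z - w) • (1 : X →L[ℂ] X)‖ ≤ ‖w - z‖ := by
    rw [norm_smul, norm_sub_rev]
    exact mul_le_of_le_one_right (norm_nonneg _) ContinuousLinearMap.norm_id_le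
  calc ‖pResolvent w A - pResolvent z A‖
      ≤ 2 * ‖pResolvent z A‖ ^ 2 * ‖(z - w) • (1 : X →L[ℂ] X)‖ :=
        norm_sub_le_of_sub_eq_mul_mul (pResolvent_sub_pResolvent hz hw)
          (le_trans (by gcongr) hwz)
    _ ≤ 2 * ‖pResolvent z A‖ ^ 2 * ‖w - z‖ := by gcongr

theorem continuousOn_pResolvent_ofReal (hA : MapsTo ((↑) : ℝ → ℂ) K (pResolventSet A)) :
    ContinuousOn (fun t : ℝ => pResolvent (t : ℂ) A) K :=
  (continuousOn_pResolvent A).comp Complex.continuous_ofReal.continuousOn hA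

/-- The constant `m_A` with an arbitrary set `K` of real points in place of the interval `[a,b]`;
`mConst a b` is `resolventSup (Icc a b)` by definition. It is a junk value if the norms of the
resolvents are unbounded on `K`. -/
noncomputable def resolventSup (K : Set ℝ) (A : X →ₗ.[ℂ] X) : ℝ :=
  sSup ((fun t : ℝ => ‖pResolvent (t : ℂ) A‖) '' K)

theorem norm_pResolvent_le_resolventSup (hK : IsCompact K)
    (hA : MapsTo ((↑) : ℝ → ℂ) K (pResolventSet A)) {t : ℝ} (ht : t ∈ K) :
    ‖pResolvent (t : ℂ) A‖ ≤ resolventSup K A :=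
  le_csSup (hK.bddAbove_image (continuousOn_pResolvent_ofReal hA).norm) (mem_image_of_mem _ ht)

end Resolvent

section Ideal

variable {X : Type*} [NormedAddCommGroup X] [NormedSpace ℂ X]
  {J : Type*} [NormedAddCommGroup J] [NormedSpace ℂ J] (I : OperatorIdeal X J)

namespace OperatorIdeal

theorem toOp_mulMul (P : X →L[ℂ] X) (S : J) (Q : X →L[ℂ] X) :
    I.toOp (I.mulMul P S Q) = P * I.toOp S * Q :=
  (I.exists_mul_mul P S Q).choose_spec

theorem norm_mulMul_le (P : X →L[ℂ] X) (S : J) (Q : X →L[ℂ] X) :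
    ‖I.mulMul P S Q‖ ≤ ‖P‖ * ‖S‖ * ‖Q‖ :=
  I.norm_mul_mul_le P S Q _ (I.toOp_mulMul P S Q)

/-- The two-sided multiplication `S ↦ P·S·Q` as a bounded operator on the ideal. -/
noncomputable def sandwich (P Q : X →L[ℂ] X) : J →L[ℂ] J :=
  LinearMap.mkContinuous
    { toFun := fun S => I.mulMul P S Q
      map_add' := fun S T => I.toOp_injective <| by
        simp only [map_add, toOp_mulMul, mul_add, add_mul]
      map_smul' := fun c S => I.toOp_injective <| by
        simp only [map_smul, toOp_mulMul, mul_smul_comm, smul_mul_assoc, RingHom.id_apply] }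
    (‖P‖ * ‖Q‖) fun S => (I.norm_mulMul_le P S Q).trans_eq (mul_right_comm _ _ _)

theorem toOp_sandwich_apply (P Q : X →L[ℂ] X) (S : J) :
    I.toOp (I.sandwich P Q S) = P * I.toOp S * Q :=
  I.toOp_mulMul P S Q

theorem norm_sandwich_le (P Q : X →L[ℂ] X) : ‖I.sandwich P Q‖ ≤ ‖P‖ * ‖Q‖ :=
  LinearMap.mkContinuous_norm_le _ (by positivity) _

theorem sandwich_sub_sandwich (P P' Q Q' : X →L[ℂ] X) :
    I.sandwich P' Q' - I.sandwich P Q = I.sandwich (P' - P) Q' + I.sandwich P (Q' - Q) := by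
  ext S
  apply I.toOp_injective
  simp only [sub_apply, add_apply, map_sub, map_add, toOp_sandwich_apply]
  noncomm_ring

theorem norm_sandwich_sub_sandwich_le (P P' Q Q' : X →L[ℂ] X) :
    ‖I.sandwich P' Q' - I.sandwich P Q‖ ≤ ‖P' - P‖ * ‖Q'‖ + ‖P‖ * ‖Q' - Q‖ := by
  rw [sandwich_sub_sandwich]
  exact norm_add_le_of_le (I.norm_sandwich_le _ _) (I.norm_sandwich_le _ _)

theorem continuous_sandwich :
    Continuous fun p : (X →L[ℂ] X) × (X →L[ℂ] X) => I.sandwich p.1 p.2 := by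
  refine continuous_iff_continuousAt.2 fun p => tendsto_iff_norm_sub_tendsto_zero.2 <|
    squeeze_zero (fun _ => norm_nonneg _)
      (fun p' => I.norm_sandwich_sub_sandwich_le p.1 p'.1 p.2 p'.2) ?_
  have hcont : Continuous fun p' : (X →L[ℂ] X) × (X →L[ℂ] X) =>
      ‖p'.1 - p.1‖ * ‖p'.2‖ + ‖p.1‖ * ‖p'.2 - p.2‖ := by fun_prop
  simpa using hcont.tendsto p

end OperatorIdeal

/-- The operator `B ↦ R(t,A)·B·R(t,A)·t` on the ideal, whose value at `B` is
`fDerIntegrand I A B t`. -/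
noncomputable def fDerKernel (A : X →ₗ.[ℂ] X) (t : ℝ) : J →L[ℂ] J :=
  t • I.sandwich (pResolvent (t : ℂ) A) (pResolvent (t : ℂ) A)

/-- The transformer `f^∇_A` as an operator on the ideal, with a set `K` in place of the interval
`[a,b]`. It is a Bochner integral in the operator norm of `J →L[ℂ] J`, not a pointwise one. -/
noncomputable def fDerOp (τ : Measure ℝ) (K : Set ℝ) (A : X →ₗ.[ℂ] X) : J →L[ℂ] J :=
  ∫ t in K, fDerKernel I A t ∂τ

variable {A : X →ₗ.[ℂ] X} {S : J} {K : Set ℝ} {m : ℝ}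

theorem continuousOn_fDerKernel (hA : MapsTo ((↑) : ℝ → ℂ) K (pResolventSet A)) :
    ContinuousOn (fDerKernel I A) K := by
  have hR := continuousOn_pResolvent_ofReal hA
  have hsandwich := I.continuous_sandwich.comp_continuousOn (hR.prodMk hR)
  exact continuousOn_id.smul hsandwich

theorem norm_fDerKernel_perturb_sub_le {t : ℝ} (hA : (t : ℂ) ∈ pResolventSet A)
    (hA' : (t : ℂ) ∈ pResolventSet (perturb A (I.toOp S)))
    (hRm : ‖pResolvent (t : ℂ) A‖ ≤ m) (hSm : ‖S‖ * m ≤ 1 / 2) :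
    ‖fDerKernel I (perturb A (I.toOp S)) t - fDerKernel I A t‖ ≤ |t| * (6 * m ^ 3 * ‖S‖) := by
  set R := pResolvent (t : ℂ) A
  set R' := pResolvent (t : ℂ) (perturb A (I.toOp S))
  have hTS : ‖I.toOp S‖ ≤ ‖S‖ := I.norm_toOp_le S
  have hsub : R' - R = R' * I.toOp S * R := pResolvent_perturb_sub_pResolvent hA hA'
  have hsmall : ‖I.toOp S‖ * ‖R‖ ≤ 1 / 2 := le_trans (by gcongr) hSm
  have hdiff : ‖R' - R‖ ≤ 2 * m ^ 2 * ‖S‖ :=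
    (norm_sub_le_of_sub_eq_mul_mul hsub hsmall).trans (by gcongr)
  have hR' : ‖R'‖ ≤ 2 * m :=
    (norm_le_two_mul_of_sub_eq_mul_mul hsub hsmall).trans (by gcongr)
  rw [fDerKernel, fDerKernel, ← smul_sub, norm_smul, Real.norm_eq_abs]
  gcongr
  calc ‖I.sandwich R' R' - I.sandwich R R‖ ≤ ‖R' - R‖ * ‖R'‖ + ‖R‖ * ‖R' - R‖ :=
        I.norm_sandwich_sub_sandwich_le R R' R R'
    _ ≤ 2 * m ^ 2 * ‖S‖ * (2 * m) + m * (2 * m ^ 2 * ‖S‖) := by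
      have hm : 0 ≤ m := (norm_nonneg R).trans hRm
      gcongr
    _ = 6 * m ^ 3 * ‖S‖ := by ring

variable (τ : Measure ℝ) [IsFiniteMeasureOnCompacts τ]

theorem integrableOn_fDerKernel (hK : IsCompact K)
    (hA : MapsTo ((↑) : ℝ → ℂ) K (pResolventSet A)) : IntegrableOn (fDerKernel I A) K τ :=
  (continuousOn_fDerKernel I hA).integrableOn_compact hK

theorem integrableOn_fDerIntegrand (hK : IsCompact K)
    (hA : MapsTo ((↑) : ℝ → ℂ) K (pResolventSet A)) (B : J) :
    IntegrableOn (fDerIntegrand I A B) K τ :=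
  (integrableOn_fDerKernel I τ hK hA).apply_continuousLinearMap B

theorem fDerOp_apply (hK : IsCompact K) (hA : MapsTo ((↑) : ℝ → ℂ) K (pResolventSet A)) (B : J) :
    fDerOp I τ K A B = ∫ t in K, fDerIntegrand I A B t ∂τ :=
  ContinuousLinearMap.integral_apply (integrableOn_fDerKernel I τ hK hA) B

theorem norm_fDerOp_perturb_sub_le (hK : IsCompact K)
    (hA : MapsTo ((↑) : ℝ → ℂ) K (pResolventSet A))
    (hA' : MapsTo ((↑) : ℝ → ℂ) K (pResolventSet (perturb A (I.toOp S))))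
    (hRm : ∀ t ∈ K, ‖pResolvent (t : ℂ) A‖ ≤ m) (hSm : ‖S‖ * m ≤ 1 / 2) :
    ‖fDerOp I τ K (perturb A (I.toOp S)) - fDerOp I τ K A‖ ≤
      6 * m ^ 3 * (∫ t in K, |t| ∂τ) * ‖S‖ := by
  have habs : IntegrableOn (fun t : ℝ => |t|) K τ :=
    continuous_abs.continuousOn.integrableOn_compact hK
  have hbound : ∀ᵐ t ∂τ.restrict K,
      ‖fDerKernel I (perturb A (I.toOp S)) t - fDerKernel I A t‖ ≤ |t| * (6 * m ^ 3 * ‖S‖) :=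
    ae_restrict_of_forall_mem hK.measurableSet fun t ht =>
      norm_fDerKernel_perturb_sub_le I (hA ht) (hA' ht) (hRm t ht) hSm
  rw [fDerOp, fDerOp, ← integral_sub (integrableOn_fDerKernel I τ hK hA')
    (integrableOn_fDerKernel I τ hK hA)]
  calc _ ≤ ∫ t in K, |t| * (6 * m ^ 3 * ‖S‖) ∂τ :=
        norm_integral_le_of_norm_le (habs.mul_const _) hbound
    _ = 6 * m ^ 3 * (∫ t in K, |t| ∂τ) * ‖S‖ := by
      rw [integral_mul_const]
      ring

theorem continuousOn_fDerOp_perturb (hK : IsCompact K) (A : X →ₗ.[ℂ] X) :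
    ContinuousOn (fun S : J => fDerOp I τ K (perturb A (I.toOp S)))
      {S : J | MapsTo ((↑) : ℝ → ℂ) K (pResolventSet (perturb A (I.toOp S)))} := by
  intro S₀ hS₀
  refine continuousWithinAt_of_norm_sub_le (m := resolventSup K (perturb A (I.toOp S₀)))
    (C := 6 * resolventSup K (perturb A (I.toOp S₀)) ^ 3 * ∫ t in K, |t| ∂τ)
    one_half_pos fun S hS hSS₀ => ?_
  have hperturb : perturb A (I.toOp S) = perturb (perturb A (I.toOp S₀)) (I.toOp (S - S₀)) := by
    rw [perturb_perturb, ← map_add, sub_add_cancel]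
  rw [mem_ofPred_eq, hperturb] at hS
  rw [hperturb]
  exact norm_fDerOp_perturb_sub_le I τ hK hS₀ hS
    (fun t ht => norm_pResolvent_le_resolventSup hK hS₀ ht) hSS₀

end Ideal

theorem fDer_continuous_general {X : Type*} [NormedAddCommGroup X] [NormedSpace ℂ X]
    {J : Type*} [NormedAddCommGroup J] [NormedSpace ℂ J] [CompleteSpace J]
    (I : OperatorIdeal X J) {K : Set ℝ} (hK : IsCompact K) (τ : Measure ℝ)
    [IsFiniteMeasureOnCompacts τ] :
    ∃ F : (X →ₗ.[ℂ] X) → (J →L[ℂ] J),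
      (∀ A : X →ₗ.[ℂ] X, MapsTo ((↑) : ℝ → ℂ) K (pResolventSet A) → ∀ B : J,
        IntegrableOn (fDerIntegrand I A B) K τ ∧ F A B = ∫ t in K, fDerIntegrand I A B t ∂τ) ∧
      (∀ A A' : X →ₗ.[ℂ] X, MapsTo ((↑) : ℝ → ℂ) K (pResolventSet A) →
        MapsTo ((↑) : ℝ → ℂ) K (pResolventSet A') →
        ∀ S : J, A' = perturb A (I.toOp S) →
        ∀ ε : ℝ, ‖S‖ < min (1 / (2 * resolventSup K A)) ε →
        ∀ B : J, ‖(∫ t in K, fDerIntegrand I A' B t ∂τ) - ∫ t in K, fDerIntegrand I A B t ∂τ‖ ≤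
          8 * resolventSup K A ^ 3 * (∫ t in K, |t| ∂τ) * ε * ‖B‖) ∧
      ∀ A : X →ₗ.[ℂ] X, ContinuousOn (fun S : J => F (perturb A (I.toOp S)))
        {S : J | MapsTo ((↑) : ℝ → ℂ) K (pResolventSet (perturb A (I.toOp S)))} := by
  refine ⟨fDerOp I τ K, fun A hA B => ⟨integrableOn_fDerIntegrand I τ hK hA B,
    fDerOp_apply I τ hK hA B⟩, ?_, continuousOn_fDerOp_perturb I τ hK⟩
  rintro A _ hA hA' S rfl ε hS B
  obtain ⟨hSm, hSε⟩ := lt_min_iff.1 hS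
  have hm : 0 < 2 * resolventSup K A := one_div_pos.1 ((norm_nonneg S).trans_lt hSm)
  have hm₀ : 0 ≤ resolventSup K A := by linarith
  have hsmall : ‖S‖ * resolventSup K A ≤ 1 / 2 := by
    rw [lt_div_iff₀ hm] at hSm
    linarith
  rw [← fDerOp_apply I τ hK hA, ← fDerOp_apply I τ hK hA', ← sub_apply]
  refine ContinuousLinearMap.le_of_opNorm_le _ ?_ B
  calc _ ≤ 6 * resolventSup K A ^ 3 * (∫ t in K, |t| ∂τ) * ‖S‖ :=
        norm_fDerOp_perturb_sub_le I τ hK hA hA'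
          (fun t ht => norm_pResolvent_le_resolventSup hK hA ht) hsmall
    _ ≤ 8 * resolventSup K A ^ 3 * (∫ t in K, |t| ∂τ) * ε := by
      gcongr
      norm_num

theorem fDer_continuous {X : Type*} [NormedAddCommGroup X] [NormedSpace ℂ X] [CompleteSpace X]
    {J : Type*} [NormedAddCommGroup J] [NormedSpace ℂ J] [CompleteSpace J]
    (I : OperatorIdeal X J) (a b : ℝ) (hab : a < b) (τ : Measure ℝ) [IsFiniteMeasure τ] :
    -- the integral exists in the ideal norm and defines a bounded operator `F A` on the ideal
    ∃ F : (X →ₗ.[ℂ] X) → (J →L[ℂ] J),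
      (∀ A : X →ₗ.[ℂ] X, MemVab a b A → ∀ B : J,
        IntegrableOn (fDerIntegrand I A B) (Icc a b) τ ∧ F A B = fDer I τ a b A B) ∧
      -- the estimate, for equivalent operators `A` and `A' = A + S`, `S` in the ideal
      (∀ A A' : X →ₗ.[ℂ] X, MemVab a b A → MemVab a b A' →
        ∀ S : J, A' = perturb A (I.toOp S) →
        ∀ ε : ℝ, 0 < ε → ‖S‖ < min (1 / (2 * mConst a b A)) ε →
        ∀ B : J, ‖fDer I τ a b A' B - fDer I τ a b A B‖ ≤
          8 * mConst a b A ^ 3 * (∫ t in Icc a b, |t| ∂τ) * ε * ‖B‖) ∧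
      -- continuity in operator norm on the equivalence class `{A + S}` of each `A`
      (∀ A : X →ₗ.[ℂ] X, MemVab a b A →
        ContinuousOn (fun S : J => F (perturb A (I.toOp S)))
          {S : J | MemVab a b (perturb A (I.toOp S))}) := by
  obtain ⟨F, hF, hestimate, hcont⟩ := fDer_continuous_general I (isCompact_Icc (a := a) (b := b)) τ
  exact ⟨F, fun A hA => hF A hA.2.2,
    fun A A' hA hA' S hS ε _ => hestimate A A' hA.2.2 hA'.2.2 S hS ε,
    fun A _ => (hcont A).mono fun S hS => hS.2.2⟩
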